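/- Let P be a Markov chain on a finite state space X with uniform stationary distribution and maximal hitting time H. Then min_{x∈X} Pr_x{ T⁺_x ≥ |X|/2 } ≥ |X|/(2H), where T⁺_x is the first return time to x. -/

import Mathlib

open Finset
open scoped Classical

namespace Paper

variable {X : Type} [Fintype X] [DecidableEq X]

/-- `P` is a stochastic matrix. -/
def IsStoch (P : Matrix X X ℝ) : Prop :=
  (∀ x y, 0 ≤ P x y) ∧ ∀ x, ∑ y, P x y = 1

/-- The uniform distribution is stationary for `P` (all columns sum to 1). -/
def UnifStationary (P : Matrix X X ℝ) : Prop := ∀ y, ∑ x, P x y = 1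

/-- Irreducibility of the chain. -/
def Irred (P : Matrix X X ℝ) : Prop := ∀ x y, ∃ n, 0 < (P ^ n) x y

/-- Probability of a trajectory `ω 0, ω 1, …, ω n` under initial distribution `μ`. -/
noncomputable def pathProb (P : Matrix X X ℝ) (μ : X → ℝ) {n : ℕ}
    (ω : Fin (n + 1) → X) : ℝ :=
  μ (ω 0) * ∏ i : Fin n, P (ω i.castSucc) (ω i.succ)

/-- Probability of an event determined by the trajectory up to time `n`. -/
noncomputable def prPath (P : Matrix X X ℝ) (μ : X → ℝ) (n : ℕ)
    (E : (Fin (n + 1) → X) → Prop) : ℝ :=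
  ∑ ω : Fin (n + 1) → X, if E ω then pathProb P μ ω else 0

/-- Expectation of a functional of the trajectory up to time `n`. -/
noncomputable def expPath (P : Matrix X X ℝ) (μ : X → ℝ) (n : ℕ)
    (f : (Fin (n + 1) → X) → ℝ) : ℝ :=
  ∑ ω : Fin (n + 1) → X, pathProb P μ ω * f ω

/-- Point mass at `x`. -/
def delta (x : X) : X → ℝ := fun z => if z = x then 1 else 0

/-- Expected hitting time `E_x[T_y]`, via `E[T] = ∑_{n ≥ 0} Pr(T > n)`. -/
noncomputable def hitExp (P : Matrix X X ℝ) (x y : X) : ℝ :=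
  (∑' n : ℕ, ENNReal.ofReal (prPath P (delta x) n (fun ω => ∀ i, ω i ≠ y))).toReal

/-- Maximal expected hitting time `H = max_{x,y} E_x[T_y]`. -/
noncomputable def maxHit (P : Matrix X X ℝ) : ℝ := ⨆ x, ⨆ y, hitExp P x y

/-- Relaxation time: `max 1/(1-|λ|)` over nontrivial eigenvalues `λ` of `P`. -/
noncomputable def Trel (P : Matrix X X ℝ) : ℝ :=
  sSup ((fun l : ℝ => 1 / (1 - |l|)) '' (spectrum ℝ P \ {1}))

/-- The set of states not visited by the trajectory `ω` (up to its time horizon). -/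
noncomputable def unvisited {n : ℕ} (ω : Fin (n + 1) → X) : Finset X :=
  Finset.univ.filter fun x => ∀ i, ω i ≠ x

/-- `Pr_x(T⁺_x ≥ s)`: the chain started at `x` does not return to `x`
at any time `i` with `1 ≤ i < s`. -/
noncomputable def prReturnGE (P : Matrix X X ℝ) (x : X) (s : ℝ) : ℝ :=
  prPath P (delta x) ⌈s⌉₊
    (fun ω => ∀ i : Fin (⌈s⌉₊ + 1), 1 ≤ (i : ℕ) → ((i : ℕ) : ℝ) < s → ω i ≠ x)

/-- Separation distance at time `n` from state `x`. -/
noncomputable def sep (P : Matrix X X ℝ) (pi : X → ℝ) (x : X) (n : ℕ) : ℝ :=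
  ⨆ y, (1 - (P ^ n) x y / pi y)

/-- Relative entropy `D(μ ‖ pi)` (with `0 log 0 = 0`). -/
noncomputable def relEnt (μ pi : X → ℝ) : ℝ := ∑ x, μ x * Real.log (μ x / pi x)

/-- Total variation distance `d_tv(μ, pi) = ∑_{y : μ y < pi y} (pi y - μ y)`. -/
noncomputable def dtv (μ pi : X → ℝ) : ℝ :=
  ∑ y ∈ Finset.univ.filter (fun y => μ y < pi y), (pi y - μ y)

/-- Entropy decay (mixing) time. -/
noncomputable def tauEnt (P : Matrix X X ℝ) (pi : X → ℝ) (ε : ℝ) : ℕ :=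
  sInf {n' | ∀ n ≥ n', ∀ x, relEnt ((P ^ n) x) pi ≤ ε}

/-- Separation mixing time. -/
noncomputable def tauSep (P : Matrix X X ℝ) (pi : X → ℝ) (ε : ℝ) : ℕ :=
  sInf {n' | ∀ n ≥ n', ∀ x, sep P pi x n ≤ ε}

/-- Total variation mixing time. -/
noncomputable def tauTV (P : Matrix X X ℝ) (pi : X → ℝ) (ε : ℝ) : ℕ :=
  sInf {n' | ∀ n ≥ n', ∀ x, dtv ((P ^ n) x) pi ≤ ε}

/-- `L²(pi)` distance of `Pᵗ(x,·)` from `pi`. -/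
noncomputable def chiDist (P : Matrix X X ℝ) (pi : X → ℝ) (t : ℕ) (x : X) : ℝ :=
  Real.sqrt (∑ y, ((P ^ t) x y / pi y - 1) ^ 2 * pi y)

/-- `L²` mixing time. -/
noncomputable def tau2 (P : Matrix X X ℝ) (pi : X → ℝ) : ℕ :=
  sInf {t | ∀ x, chiDist P pi t x ≤ 1 / 4}

/-- Uniform distribution on a finite type. -/
noncomputable def unif (Y : Type) [Fintype Y] : Y → ℝ := fun _ => (Fintype.card Y : ℝ)⁻¹

/-- The `m`-state lamplighter chain over a base chain `Pb`:
the lamp at the current position is randomized, the lamplighter moves one step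
of the base chain, and the lamp at the new position is randomized. -/
noncomputable def lampChain {V : Type} [Fintype V] [DecidableEq V]
    (Pb : Matrix V V ℝ) (m : ℕ) :
    Matrix ((V → Fin m) × V) ((V → Fin m) × V) ℝ :=
  fun p q =>
    if ∀ z, z ≠ p.2 → z ≠ q.2 → q.1 z = p.1 z then
      Pb p.2 q.2 * ((m : ℝ)⁻¹) ^ (({p.2, q.2} : Finset V).card)
    else 0

/-- Simple random walk on a `d`-regular graph. -/
noncomputable def srw {V : Type} [Fintype V] [DecidableEq V]
    (G : SimpleGraph V) (d : ℕ) : Matrix V V ℝ :=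
  fun x y => if G.Adj x y then (d : ℝ)⁻¹ else 0

/-!
Let `vₙ(z)` be the probability that the chain started at `z` avoids `x` at times `0, …, n - 1`, and
`rₙ = (P vₙ)(x) = Pr_x(T⁺_x > n)`. Then `vₙ = Qⁿ 1`, where `Q` is `P` with row `x` replaced by zero.
Pairing `vₙ` with the stationary `π` loses exactly `π(x) rₙ` per step, and `vₙ → 0`, which is Kac's
formula `∑ₙ rₙ = 1 / π(x)`. For `n ≥ 1` the terms with index below `n` contribute at most `n`,
while by the Markov property at time `n` the others contribute at most `H rₙ`, so
`1 / π(x) ≤ n + H · Pr_x(T⁺_x > n)`. Taking `n = ⌊1 / (2 π(x))⌋` gives the claim when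
`1 / (2 π(x)) ≥ 1`. Otherwise the event `T⁺_x ≥ 1 / (2 π(x))` is certain, and it is enough that
`H ≥ 1`; on a one-point space `H = 0` and the claim holds because `a / 0 = 0`.
-/

open Matrix

lemma monotone_mulVec {m n R : Type*} [Fintype n] [Semiring R] [PartialOrder R] [IsOrderedRing R]
    {M : Matrix m n R} (hM : ∀ i j, 0 ≤ M i j) : Monotone (M *ᵥ ·) :=
  fun _ _ hvw i => dotProduct_le_dotProduct_of_nonneg_left hvw (hM i)

lemma hasSum_mulVec {ι m n R : Type*} [Fintype n] [NonUnitalNonAssocSemiring R]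
    [TopologicalSpace R] [IsTopologicalSemiring R] (M : Matrix m n R) {f : ι → n → R} {a : n → R}
    (hf : HasSum f a) : HasSum (fun i => M *ᵥ f i) (M *ᵥ a) :=
  hf.map (⟨⟨(M *ᵥ ·), mulVec_zero M⟩, mulVec_add M⟩ : (n → R) →+ (m → R))
    (continuous_const.matrix_mulVec continuous_id)

lemma summable_of_add_le_mul {f : ℕ → ℝ} (hf : 0 ≤ f) {c : ℝ} (hc : c < 1) {N : ℕ}
    (hstep : ∀ n, f (N + n) ≤ c * f n) : Summable f := by
  refine summable_of_sum_range_le (c := (∑ n ∈ range N, f n) / (1 - c)) hf fun K => ?_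
  rw [le_div_iff₀ (sub_pos.2 hc)]
  have hsum : ∑ n ∈ range K, f n ≤ ∑ n ∈ range N, f n + c * ∑ n ∈ range K, f n := calc
    ∑ n ∈ range K, f n ≤ ∑ n ∈ range (N + K), f n :=
      sum_le_sum_of_subset_of_nonneg (range_mono (Nat.le_add_left K N)) fun n _ _ => hf n
    _ = ∑ n ∈ range N, f n + ∑ n ∈ range K, f (N + n) := sum_range_add f N K
    _ ≤ ∑ n ∈ range N, f n + c * ∑ n ∈ range K, f n := by
      rw [mul_sum]
      gcongr with n
      exact hstep n
  linarith

lemma IsStoch.mulVec_one {Y : Type} [Fintype Y] {P : Matrix Y Y ℝ} (hP : IsStoch P) :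
    P *ᵥ 1 = 1 := by
  ext z
  simpa [mulVec, dotProduct] using hP.2 z

variable {P : Matrix X X ℝ} {x z : X}

lemma IsStoch.mem_rowStochastic (hP : IsStoch P) : P ∈ rowStochastic ℝ X :=
  mem_rowStochastic_iff_sum.2 hP

lemma prPath_delta_zero (P : Matrix X X ℝ) (z : X) (E : (Fin 1 → X) → Prop) :
    prPath P (delta z) 0 E = if E (fun _ => z) then 1 else 0 := by
  rw [prPath, Fintype.sum_eq_single fun _ => z]
  · simp [pathProb, delta]
  · intro ω hω
    have start_ne : ω 0 ≠ z := fun h => hω (funext (Fin.forall_fin_one.2 h))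
    simp [pathProb, delta, start_ne]

lemma pathProb_delta_cons (P : Matrix X X ℝ) (z : X) {n : ℕ} (ω : Fin (n + 1) → X) :
    pathProb P (delta z) (Fin.cons z ω : Fin (n + 2) → X) =
      ∑ y, P z y * pathProb P (delta y) ω := by
  rw [Fintype.sum_eq_single (ω 0)]
  · simp [pathProb, delta, Fin.prod_univ_succ]
  · intro y hy
    simp [pathProb, delta, hy.symm]

lemma prPath_delta_succ (P : Matrix X X ℝ) (z : X) (n : ℕ) (E : (Fin (n + 2) → X) → Prop) :
    prPath P (delta z) (n + 1) E =
      ∑ y, P z y * prPath P (delta y) n fun ω => E (Fin.cons z ω) := by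
  unfold prPath
  rw [← (Fin.consEquiv fun _ : Fin (n + 2) => X).sum_comp, Fintype.sum_prod_type,
    Fintype.sum_eq_single z]
  · simp_rw [mul_sum]
    rw [sum_comm]
    refine sum_congr rfl fun ω _ => ?_
    change (if E (Fin.cons z ω) then pathProb P (delta z) (Fin.cons z ω) else 0) = _
    split_ifs
    · exact pathProb_delta_cons P z ω
    · simp
  · intro y hy
    refine sum_eq_zero fun ω _ => ?_
    simp [pathProb, delta, hy]

/-- The taboo matrix of `x`: the transition matrix of the chain killed when it leaves `x`. -/
def tabooMatrix (P : Matrix X X ℝ) (x : X) : Matrix X X ℝ := P.updateRow x 0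

/-- `avoidProb P x n z` is the probability that the chain started at `z` is not at `x` at any of the
`n` times `0, …, n - 1`, that is, `Pr_z(T_x ≥ n)`. -/
def avoidProb (P : Matrix X X ℝ) (x : X) (n : ℕ) : X → ℝ := tabooMatrix P x ^ n *ᵥ 1

/-- `noReturnProb P x n` is `Pr_x(T⁺_x > n)`: the first step leads from `x` to a state from which
the chain avoids `x` for `n` further times. -/
def noReturnProb (P : Matrix X X ℝ) (x : X) (n : ℕ) : ℝ := (P *ᵥ avoidProb P x n) x

@[simp]
lemma avoidProb_zero : avoidProb P x 0 = 1 := by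
  simp [avoidProb]

lemma avoidProb_add (m n : ℕ) :
    avoidProb P x (m + n) = tabooMatrix P x ^ m *ᵥ avoidProb P x n := by
  rw [avoidProb, avoidProb, pow_add, mulVec_mulVec]

lemma avoidProb_succ (n : ℕ) :
    avoidProb P x (n + 1) = Function.update (P *ᵥ avoidProb P x n) x 0 := by
  rw [add_comm, avoidProb_add, pow_one, tabooMatrix, updateRow_mulVec, zero_dotProduct]

@[simp]
lemma avoidProb_succ_self (n : ℕ) : avoidProb P x (n + 1) x = 0 := by
  simp [avoidProb_succ]

lemma avoidProb_succ_of_ne (hz : z ≠ x) (n : ℕ) :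
    avoidProb P x (n + 1) z = (P *ᵥ avoidProb P x n) z := by
  simp [avoidProb_succ, hz]

lemma avoidProb_one_of_ne (hP : IsStoch P) (hz : z ≠ x) : avoidProb P x 1 z = 1 := by
  simp [avoidProb_succ_of_ne hz, hP.mulVec_one]

lemma prPath_delta_forall_lt_ne (hP : IsStoch P) {k n : ℕ} (hkn : k ≤ n + 1) :
    prPath P (delta z) n (fun ω => ∀ i : Fin (n + 1), (i : ℕ) < k → ω i ≠ x) =
      avoidProb P x k z := by
  induction n generalizing k z with
  | zero =>
    rw [prPath_delta_zero]
    obtain rfl | rfl : k = 0 ∨ k = 1 := by omega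
    · simp
    · by_cases hz : z = x
      · simp [hz]
      · simp [hz, avoidProb_one_of_ne hP hz]
  | succ n ih =>
    rw [prPath_delta_succ]
    simp only [Fin.forall_fin_succ (n := n + 1), Fin.cons_zero, Fin.cons_succ, Fin.val_zero,
      Fin.val_succ]
    cases k with
    | zero =>
      have prPath_true (y : X) : prPath P (delta y) n (fun _ => True) = 1 := by
        simpa using ih (z := y) (Nat.zero_le (n + 1))
      simp [prPath_true, hP.2 z]
    | succ k =>
      by_cases hz : z = x
      · simp [hz, prPath]
      · simp [hz, ih (Nat.le_of_succ_le_succ hkn), avoidProb_succ_of_ne hz, mulVec, dotProduct]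

lemma tabooMatrix_nonneg (hP : IsStoch P) (y z : X) : 0 ≤ tabooMatrix P x y z := by
  rw [tabooMatrix, updateRow_apply]
  split_ifs
  exacts [le_rfl, hP.1 y z]

lemma tabooMatrix_pow_mulVec_mono (hP : IsStoch P) (n : ℕ) :
    Monotone (tabooMatrix P x ^ n *ᵥ ·) :=
  monotone_mulVec (pow_apply_nonneg (tabooMatrix_nonneg hP) n)

lemma avoidProb_nonneg (hP : IsStoch P) (n : ℕ) : 0 ≤ avoidProb P x n := by
  simpa [avoidProb] using tabooMatrix_pow_mulVec_mono (x := x) hP n (zero_le_one' (X → ℝ))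

lemma antitone_avoidProb (hP : IsStoch P) : Antitone (avoidProb P x) := by
  have avoidProb_one_le : avoidProb P x 1 ≤ 1 := by
    intro z
    by_cases hz : z = x
    · simp [hz]
    · simp [avoidProb_one_of_ne hP hz]
  refine antitone_nat_of_succ_le fun n => ?_
  rw [avoidProb_add n 1]
  exact tabooMatrix_pow_mulVec_mono hP n avoidProb_one_le

lemma avoidProb_succ_le_one_sub_pow (hP : IsStoch P) (n : ℕ) (z : X) :
    avoidProb P x (n + 1) z ≤ 1 - (P ^ n) z x := by
  have pow_mem_rowStochastic := pow_mem hP.mem_rowStochastic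
  induction n generalizing z with
  | zero =>
    by_cases hz : z = x
    · simp [hz]
    · simp [hz, avoidProb_one_of_ne hP hz]
  | succ n ih =>
    by_cases hz : z = x
    · simpa [hz] using le_one_of_mem_rowStochastic (pow_mem_rowStochastic (n + 1))
    · calc avoidProb P x (n + 2) z
        _ = (P *ᵥ avoidProb P x (n + 1)) z := avoidProb_succ_of_ne hz _
        _ ≤ (P *ᵥ (1 - (P ^ n).col x)) z := monotone_mulVec hP.1 ih z
        _ = 1 - (P ^ (n + 1)) z x := by
          rw [mulVec_sub, hP.mulVec_one, pow_succ', mul_apply_eq_vecMul]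
          simp [mulVec, dotProduct, vecMul]

lemma exists_avoidProb_le_lt_one (hP : IsStoch P) (hirr : Irred P) (x : X) :
    ∃ c < 1, ∃ N, ∀ z, avoidProb P x N z ≤ c := by
  have : Nonempty X := ⟨x⟩
  choose n hn using fun z => hirr z x
  let N := univ.sup fun z => n z + 1
  have avoidProb_lt_one (z : X) : avoidProb P x N z < 1 := calc
    avoidProb P x N z ≤ avoidProb P x (n z + 1) z :=
      antitone_avoidProb hP (le_sup (f := fun z => n z + 1) (mem_univ z)) z
    _ ≤ 1 - (P ^ n z) z x := avoidProb_succ_le_one_sub_pow hP (n z) z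
    _ < 1 := sub_lt_self 1 (hn z)
  obtain ⟨w, hw⟩ := Finite.exists_max (avoidProb P x N)
  exact ⟨avoidProb P x N w, avoidProb_lt_one w, N, hw⟩

lemma summable_avoidProb (hP : IsStoch P) (hirr : Irred P) : Summable (avoidProb P x) := by
  obtain ⟨c, hc, N, hN⟩ := exists_avoidProb_le_lt_one hP hirr x
  refine Pi.summable.2 fun z =>
    summable_of_add_le_mul (fun n => avoidProb_nonneg hP n z) hc (N := N) fun n => ?_
  calc avoidProb P x (N + n) z
    _ = (tabooMatrix P x ^ n *ᵥ avoidProb P x N) z := by rw [add_comm, avoidProb_add]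
    _ ≤ (tabooMatrix P x ^ n *ᵥ (c • 1)) z :=
      tabooMatrix_pow_mulVec_mono hP n (fun y => by simpa using hN y) z
    _ = c * avoidProb P x n z := by rw [mulVec_smul, avoidProb, Pi.smul_apply, smul_eq_mul]

lemma hitExp_eq_tsum_avoidProb (hP : IsStoch P) (z x : X) :
    hitExp P z x = ∑' n, avoidProb P x (n + 1) z := by
  have prPath_eq (n : ℕ) :
      prPath P (delta z) n (fun ω => ∀ i, ω i ≠ x) = avoidProb P x (n + 1) z := by
    rw [← prPath_delta_forall_lt_ne hP le_rfl]
    simp only [Fin.is_lt, forall_const]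
  rw [hitExp, ENNReal.tsum_toReal_eq fun _ => ENNReal.ofReal_ne_top]
  simp only [prPath_eq, ENNReal.toReal_ofReal (avoidProb_nonneg hP _ z)]

lemma hitExp_self (hP : IsStoch P) : hitExp P x x = 0 := by
  simp [hitExp_eq_tsum_avoidProb hP]

lemma hasSum_avoidProb_succ_hitExp (hP : IsStoch P) (hirr : Irred P) :
    HasSum (fun n => avoidProb P x (n + 1)) (fun z => hitExp P z x) := by
  have summable_succ := (summable_nat_add_iff 1).2 (summable_avoidProb (x := x) hP hirr)
  refine Pi.hasSum.2 fun z => ?_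
  rw [hitExp_eq_tsum_avoidProb hP]
  exact (Pi.summable.1 summable_succ z).hasSum

lemma hitExp_le_maxHit (P : Matrix X X ℝ) (z x : X) : hitExp P z x ≤ maxHit P :=
  (le_ciSup (f := fun y => hitExp P z y) (Set.finite_range _).bddAbove x).trans
    (le_ciSup (f := fun w => ⨆ y, hitExp P w y) (Set.finite_range _).bddAbove z)

lemma maxHit_nonneg (P : Matrix X X ℝ) : 0 ≤ maxHit P :=
  Real.iSup_nonneg fun _ => Real.iSup_nonneg fun _ => ENNReal.toReal_nonneg

lemma hitExp_le_maxHit_smul_avoidProb_one (hP : IsStoch P) :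
    (fun z => hitExp P z x) ≤ maxHit P • avoidProb P x 1 := by
  intro z
  by_cases hz : z = x
  · simp [hz, hitExp_self hP]
  · simpa [avoidProb_one_of_ne hP hz] using hitExp_le_maxHit P z x

lemma one_le_maxHit [Nontrivial X] (hP : IsStoch P) (hirr : Irred P) : 1 ≤ maxHit P := by
  obtain ⟨z, x, hzx⟩ := exists_pair_ne X
  calc 1 = avoidProb P x 1 z := (avoidProb_one_of_ne hP hzx).symm
    _ ≤ hitExp P z x :=
      le_hasSum (Pi.hasSum.1 (hasSum_avoidProb_succ_hitExp hP hirr) z) 0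
        fun n _ => avoidProb_nonneg hP (n + 1) z
    _ ≤ maxHit P := hitExp_le_maxHit P z x

lemma maxHit_of_subsingleton [Subsingleton X] (P : Matrix X X ℝ) : maxHit P = 0 := by
  have not_forall_ne (n : ℕ) (y : X) (ω : Fin (n + 1) → X) : ¬ ∀ i, ω i ≠ y :=
    fun h => h 0 (Subsingleton.elim _ _)
  simp only [maxHit, hitExp, prPath, if_neg (not_forall_ne _ _ _), sum_const_zero,
    ENNReal.ofReal_zero, tsum_zero, ENNReal.toReal_zero, Real.iSup_const_zero]

lemma noReturnProb_zero (hP : IsStoch P) : noReturnProb P x 0 = 1 := by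
  simp [noReturnProb, hP.mulVec_one]

lemma noReturnProb_nonneg (hP : IsStoch P) (n : ℕ) : 0 ≤ noReturnProb P x n := by
  simpa [noReturnProb] using monotone_mulVec hP.1 (avoidProb_nonneg (x := x) hP n) x

lemma antitone_noReturnProb (hP : IsStoch P) : Antitone (noReturnProb P x) :=
  fun _ _ hmn => monotone_mulVec hP.1 (antitone_avoidProb hP hmn) x

lemma prReturnGE_eq_noReturnProb (hP : IsStoch P) (x : X) (s : ℝ) :
    prReturnGE P x s = noReturnProb P x (⌈s⌉₊ - 1) := by
  unfold prReturnGE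
  simp only [← Nat.lt_ceil]
  cases ⌈s⌉₊ with
  | zero => simp [prPath_delta_zero, noReturnProb_zero hP]
  | succ m =>
    rw [prPath_delta_succ]
    simp [Fin.forall_fin_succ (n := m + 1), prPath_delta_forall_lt_ne hP (Nat.le_succ m),
      noReturnProb, mulVec, dotProduct]

lemma prReturnGE_nonneg (hP : IsStoch P) (x : X) (s : ℝ) : 0 ≤ prReturnGE P x s := by
  rw [prReturnGE_eq_noReturnProb hP]
  exact noReturnProb_nonneg hP _

lemma prReturnGE_of_le_one (hP : IsStoch P) (x : X) {s : ℝ} (hs : s ≤ 1) :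
    prReturnGE P x s = 1 := by
  rw [prReturnGE_eq_noReturnProb hP, Nat.sub_eq_zero_of_le (Nat.ceil_le.2 (mod_cast hs)),
    noReturnProb_zero hP]

lemma summable_noReturnProb (hP : IsStoch P) (hirr : Irred P) : Summable (noReturnProb P x) :=
  (Pi.hasSum.1 (hasSum_mulVec P (summable_avoidProb hP hirr).hasSum) x).summable

lemma tsum_noReturnProb_add_le (hP : IsStoch P) (hirr : Irred P) {n : ℕ} (hn : 1 ≤ n) :
    ∑' k, noReturnProb P x (k + n) ≤ maxHit P * noReturnProb P x n := by
  obtain ⟨m, rfl⟩ := Nat.exists_eq_add_of_le' hn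
  let M := P * tabooMatrix P x ^ m
  have M_nonneg (y z : X) : 0 ≤ M y z :=
    sum_nonneg fun w _ =>
      mul_nonneg (hP.1 y w) (pow_apply_nonneg (tabooMatrix_nonneg hP) m w z)
  have noReturnProb_add (k : ℕ) :
      noReturnProb P x (k + (m + 1)) = (M *ᵥ avoidProb P x (k + 1)) x := by
    rw [add_left_comm, noReturnProb, avoidProb_add, mulVec_mulVec]
  have hasSum_tail : HasSum (fun k => noReturnProb P x (k + (m + 1)))
      ((M *ᵥ fun z => hitExp P z x) x) := by
    simp only [noReturnProb_add]
    exact Pi.hasSum.1 (hasSum_mulVec M (hasSum_avoidProb_succ_hitExp hP hirr)) x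
  calc ∑' k, noReturnProb P x (k + (m + 1))
    _ = (M *ᵥ fun z => hitExp P z x) x := hasSum_tail.tsum_eq
    _ ≤ (M *ᵥ (maxHit P • avoidProb P x 1)) x :=
      monotone_mulVec M_nonneg (hitExp_le_maxHit_smul_avoidProb_one hP) x
    _ = maxHit P * noReturnProb P x (m + 1) := by
      rw [mulVec_smul, ← zero_add (m + 1), noReturnProb_add, Pi.smul_apply, smul_eq_mul]

section Stationary

variable {π : X → ℝ}

lemma dotProduct_avoidProb_succ (hπP : π ᵥ* P = π) (n : ℕ) :
    π ⬝ᵥ avoidProb P x (n + 1) = π ⬝ᵥ avoidProb P x n - π x * noReturnProb P x n := by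
  have avoidProb_succ_eq_sub_single : avoidProb P x (n + 1) =
      P *ᵥ avoidProb P x n - Pi.single x (noReturnProb P x n) := by
    ext z
    by_cases hz : z = x
    · simp [hz, noReturnProb]
    · simp [hz, avoidProb_succ_of_ne hz]
  rw [avoidProb_succ_eq_sub_single, dotProduct_sub, dotProduct_single, dotProduct_mulVec, hπP]

lemma mul_sum_range_noReturnProb (hπ : ∑ z, π z = 1) (hπP : π ᵥ* P = π) (n : ℕ) :
    π x * ∑ k ∈ range n, noReturnProb P x k = 1 - π ⬝ᵥ avoidProb P x n := by
  induction n with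
  | zero => simp [dotProduct_one, hπ]
  | succ n ih =>
    rw [sum_range_succ, mul_add, ih, dotProduct_avoidProb_succ hπP]
    ring

lemma mul_tsum_noReturnProb (hP : IsStoch P) (hirr : Irred P) (hπ : ∑ z, π z = 1)
    (hπP : π ᵥ* P = π) : π x * ∑' n, noReturnProb P x n = 1 := by
  have tendsto_avoidProb := (summable_avoidProb (x := x) hP hirr).tendsto_atTop_zero
  have tendsto_dotProduct : Filter.Tendsto (fun n => 1 - π ⬝ᵥ avoidProb P x n) .atTop (nhds 1) := by
    simpa using ((continuous_const.dotProduct continuous_id).tendsto' _ _ rfl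
      |>.comp tendsto_avoidProb).const_sub 1
  refine tendsto_nhds_unique ?_ tendsto_dotProduct
  simpa only [mul_sum_range_noReturnProb hπ hπP] using
    (summable_noReturnProb (x := x) hP hirr).hasSum.tendsto_sum_nat.const_mul (π x)

lemma tsum_noReturnProb (hP : IsStoch P) (hirr : Irred P) (hπ : ∑ z, π z = 1)
    (hπP : π ᵥ* P = π) (x : X) : ∑' n, noReturnProb P x n = (π x)⁻¹ :=
  eq_inv_of_mul_eq_one_right (mul_tsum_noReturnProb hP hirr hπ hπP)

lemma inv_le_add_maxHit_mul_noReturnProb (hP : IsStoch P) (hirr : Irred P) (hπ : ∑ z, π z = 1)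
    (hπP : π ᵥ* P = π) (x : X) {n : ℕ} (hn : 1 ≤ n) :
    (π x)⁻¹ ≤ n + maxHit P * noReturnProb P x n := by
  have noReturnProb_le_one (k : ℕ) : noReturnProb P x k ≤ 1 :=
    (antitone_noReturnProb hP (Nat.zero_le k)).trans_eq (noReturnProb_zero hP)
  calc (π x)⁻¹
    _ = ∑ k ∈ range n, noReturnProb P x k + ∑' k, noReturnProb P x (k + n) := by
      rw [← tsum_noReturnProb hP hirr hπ hπP x,
        (summable_noReturnProb hP hirr).sum_add_tsum_nat_add]
    _ ≤ n + maxHit P * noReturnProb P x n := by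
      gcongr
      · simpa using sum_le_card_nsmul (range n) _ 1 fun k _ => noReturnProb_le_one k
      · exact tsum_noReturnProb_add_le hP hirr hn

lemma inv_le_add_maxHit_mul_prReturnGE (hP : IsStoch P) (hirr : Irred P) (hπ : ∑ z, π z = 1)
    (hπP : π ᵥ* P = π) (x : X) {s : ℝ} (hs : 1 ≤ s) :
    (π x)⁻¹ ≤ s + maxHit P * prReturnGE P x s := by
  have ceil_sub_one_le_floor : ⌈s⌉₊ - 1 ≤ ⌊s⌋₊ := Nat.sub_le_of_le_add (Nat.ceil_le_floor_add_one s)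
  calc (π x)⁻¹
    _ ≤ ⌊s⌋₊ + maxHit P * noReturnProb P x ⌊s⌋₊ :=
      inv_le_add_maxHit_mul_noReturnProb hP hirr hπ hπP x (Nat.one_le_floor_iff s |>.2 hs)
    _ ≤ s + maxHit P * prReturnGE P x s := by
      rw [prReturnGE_eq_noReturnProb hP]
      gcongr
      · exact Nat.floor_le (zero_le_one.trans hs)
      · exact maxHit_nonneg P
      · exact antitone_noReturnProb hP ceil_sub_one_le_floor

theorem return_time_lower_bound_general (hP : IsStoch P) (hirr : Irred P) (hπ : ∑ z, π z = 1)
    (hπP : π ᵥ* P = π) (x : X) :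
    (π x)⁻¹ / (2 * maxHit P) ≤ prReturnGE P x ((π x)⁻¹ / 2) := by
  obtain _ | _ := subsingleton_or_nontrivial X
  · simpa [maxHit_of_subsingleton P] using prReturnGE_nonneg hP x ((π x)⁻¹ / 2)
  have hH := one_le_maxHit hP hirr
  rw [← div_div, div_le_iff₀ (zero_lt_one.trans_le hH)]
  obtain hs | hs := le_total 1 ((π x)⁻¹ / 2)
  · linarith [inv_le_add_maxHit_mul_prReturnGE hP hirr hπ hπP x hs]
  · rw [prReturnGE_of_le_one hP x hs, one_mul]
    exact hs.trans hH

end Stationary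

lemma sum_unif (Y : Type) [Fintype Y] [Nonempty Y] : ∑ y, unif Y y = 1 := by
  simp [unif]

lemma UnifStationary.unif_vecMul {Y : Type} [Fintype Y] {P : Matrix Y Y ℝ}
    (hu : UnifStationary P) : unif Y ᵥ* P = unif Y := by
  ext y
  simp [unif, vecMul, dotProduct, ← mul_sum, hu y]

/-- For a chain with uniform stationary distribution and maximal
hitting time `H`, `min_x Pr_x(T⁺_x ≥ |X|/2) ≥ |X|/(2H)`. -/
theorem return_time_lower_bound
    (X : Type) [Fintype X] [DecidableEq X] [Nonempty X]
    (P : Matrix X X ℝ)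
    (hP : IsStoch P) (hu : UnifStationary P) (hirr : Irred P) :
    ∀ x : X,
      (Fintype.card X : ℝ) / (2 * maxHit P) ≤
        prReturnGE P x ((Fintype.card X : ℝ) / 2) := by
  intro x
  simpa [unif] using return_time_lower_bound_general hP hirr (sum_unif X) hu.unif_vecMul x

end Paper
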